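/- Let 𝒳 and 𝒴 be finite nonempty types, let d be a positive natural number, and let σ : 𝒳 → 𝒴 → M_d(ℂ) be a family of positive semidefinite matrices. Define P_guess(XY|E) := sup over all POVMs M : 𝒳 × 𝒴 → M_d(ℂ) of Σ_{x,y} Re Tr(M(x,y) · σ x y), and define P_guess(X|YE) := Σ_y [ sup over all POVMs N : 𝒳 → M_d(ℂ) of Σ_x Re Tr(N x · σ x y) ]. Then P_guess(XY|E) ≥ P_guess(X|YE) / |𝒴|. -/

import Mathlib

/-!
A POVM `N` guessing `X` becomes a POVM guessing `(X, Y)` by answering `(x, y₀)` for a fixed `y₀`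
whenever `N` answers `x`. It succeeds exactly when `Y = y₀` and `N` guesses `X` correctly, so
`P_guess(XY|E)` bounds each of the `|𝒴|` summands of `P_guess(X|YE)`. The effects of a POVM lie
between `0` and `1`, so POVMs form a compact set and the suprema are finite.
-/

open Matrix ComplexOrder

/-- A POVM on `ℂᵈ` indexed by a finite type `K`: a family of positive
semidefinite matrices summing to the identity. -/
def IsPOVM {K n : Type*} [Fintype K] [Fintype n] [DecidableEq n]
    (M : K → Matrix n n ℂ) : Prop :=
  (∀ k, (M k).PosSemidef) ∧ ∑ k, M k = 1

section POVM

variable {K L n : Type*} [Fintype K] [Fintype L] [Fintype n] [DecidableEq n]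

theorem isPOVM_single_one [DecidableEq K] (k : K) :
    IsPOVM (Pi.single k 1 : K → Matrix n n ℂ) := by
  refine ⟨fun j => ?_, Fintype.sum_pi_single' k 1⟩
  obtain rfl | hj := eq_or_ne j k
  · simpa only [Pi.single_eq_same] using PosSemidef.one
  · simpa only [Pi.single_eq_of_ne hj] using PosSemidef.zero

theorem IsPOVM.sum_fiber [DecidableEq L] {M : K → Matrix n n ℂ} (hM : IsPOVM M) (f : K → L) :
    IsPOVM fun l => ∑ k with f k = l, M k :=
  ⟨fun _ => posSemidef_sum _ fun k _ => hM.1 k, (Finset.sum_fiberwise _ f M).trans hM.2⟩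

section Compactness

open scoped MatrixOrder Matrix.Norms.L2Operator

theorem isPOVM_iff_nonneg {M : K → Matrix n n ℂ} : IsPOVM M ↔ 0 ≤ M ∧ ∑ k, M k = 1 := by
  simp only [IsPOVM, Pi.le_def, Pi.zero_apply, nonneg_iff_posSemidef]

theorem IsPOVM.norm_le_one {M : K → Matrix n n ℂ} (hM : IsPOVM M) (k : K) : ‖M k‖ ≤ 1 := by
  obtain ⟨nonneg, sum_eq_one⟩ := isPOVM_iff_nonneg.1 hM
  have le_one : M k ≤ 1 :=
    sum_eq_one ▸ Finset.single_le_sum (fun j _ => nonneg j) (Finset.mem_univ k)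
  exact (CStarAlgebra.norm_le_one_iff_of_nonneg (M k) (nonneg k)).2 le_one

theorem isClosed_setOf_isPOVM : IsClosed {M : K → Matrix n n ℂ | IsPOVM M} := by
  simp only [isPOVM_iff_nonneg]
  exact (isClosed_le continuous_const continuous_id).and
    (isClosed_eq (by fun_prop) continuous_const)

theorem isCompact_setOf_isPOVM : IsCompact {M : K → Matrix n n ℂ | IsPOVM M} := by
  have : ProperSpace (Matrix n n ℂ) := FiniteDimensional.proper ℂ _
  refine (isCompact_closedBall (0 : K → Matrix n n ℂ) 1).of_isClosed_subset
    isClosed_setOf_isPOVM fun M hM => ?_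
  simpa only [mem_closedBall_zero_iff] using
    (pi_norm_le_iff_of_nonneg zero_le_one).2 hM.norm_le_one

end Compactness

/-- The optimal probability of guessing `k` from a quantum register, where `ρ k` is the state of
the register weighted by the probability of `k`. Real parts make this meaningful for arbitrary
matrices `ρ k`; if `K` is empty and `n` is not, there is no POVM and the value is the junk `0`. -/
noncomputable def guessingProb (ρ : K → Matrix n n ℂ) : ℝ :=
  sSup {s : ℝ | ∃ M : K → Matrix n n ℂ, IsPOVM M ∧ s = ∑ k, ((M k * ρ k).trace).re}

theorem IsPOVM.sum_re_trace_le_guessingProb {M : K → Matrix n n ℂ} (hM : IsPOVM M)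
    (ρ : K → Matrix n n ℂ) : ∑ k, ((M k * ρ k).trace).re ≤ guessingProb ρ := by
  have continuous_score : Continuous fun M : K → Matrix n n ℂ => ∑ k, ((M k * ρ k).trace).re := by
    fun_prop
  obtain ⟨b, hb⟩ := isCompact_setOf_isPOVM.bddAbove_image continuous_score.continuousOn
  refine le_csSup ⟨b, ?_⟩ ⟨M, hM, rfl⟩
  rintro _ ⟨M', hM', rfl⟩
  exact hb ⟨M', hM', rfl⟩

theorem guessingProb_le [Nonempty K] {ρ : K → Matrix n n ℂ} {b : ℝ}
    (h : ∀ M : K → Matrix n n ℂ, IsPOVM M → ∑ k, ((M k * ρ k).trace).re ≤ b) :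
    guessingProb ρ ≤ b := by
  classical
  refine csSup_le ⟨_, _, isPOVM_single_one (Classical.arbitrary K), rfl⟩ ?_
  rintro _ ⟨M, hM, rfl⟩
  exact h M hM

theorem guessingProb_comp_le [Nonempty K] (ρ : L → Matrix n n ℂ) (f : K → L) :
    guessingProb (fun k => ρ (f k)) ≤ guessingProb ρ := by
  classical
  refine guessingProb_le fun M hM => ?_
  calc ∑ k, ((M k * ρ (f k)).trace).re
      = ∑ l, ∑ k with f k = l, ((M k * ρ (f k)).trace).re :=
        (Finset.sum_fiberwise _ f _).symm
    _ = ∑ l, (((∑ k with f k = l, M k) * ρ l).trace).re := by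
        refine Finset.sum_congr rfl fun l _ => ?_
        rw [Finset.sum_mul, trace_sum, Complex.re_sum]
        refine Finset.sum_congr rfl fun k hk => ?_
        rw [(Finset.mem_filter.1 hk).2]
    _ ≤ guessingProb ρ := (hM.sum_fiber f).sum_re_trace_le_guessingProb ρ

end POVM

theorem stmt_15_general {𝒳 𝒴 n : Type*} [Fintype 𝒳] [Fintype 𝒴] [Nonempty 𝒳] [Nonempty 𝒴]
    [Fintype n] [DecidableEq n] (σ : 𝒳 → 𝒴 → Matrix n n ℂ) :
    (∑ y, guessingProb fun x => σ x y) / (Fintype.card 𝒴 : ℝ) ≤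
      guessingProb fun p : 𝒳 × 𝒴 => σ p.1 p.2 := by
  rw [div_le_iff₀' (by positivity), ← nsmul_eq_mul]
  exact Finset.sum_le_card_nsmul _ _ _ fun y _ =>
    guessingProb_comp_le (fun p : 𝒳 × 𝒴 => σ p.1 p.2) fun x => (x, y)

/-- Guessing-probability form of the min-entropy chain rule:
`P_guess(XY|E) ≥ P_guess(X|YE) / |𝒴|` for any family of positive semidefinite
matrices `σ : 𝒳 → 𝒴 → M_d(ℂ)` encoding a subnormalized ccq-state. -/
theorem stmt_15 (𝒳 𝒴 : Type) [Fintype 𝒳] [Fintype 𝒴] [Nonempty 𝒳] [Nonempty 𝒴]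
    (d : ℕ) (hd : 0 < d)
    (σ : 𝒳 → 𝒴 → Matrix (Fin d) (Fin d) ℂ) (hσ : ∀ x y, (σ x y).PosSemidef) :
    sSup {s : ℝ | ∃ M : 𝒳 × 𝒴 → Matrix (Fin d) (Fin d) ℂ, IsPOVM M ∧
        s = ∑ x : 𝒳, ∑ y : 𝒴, ((M (x, y) * σ x y).trace).re}
      ≥ (∑ y : 𝒴, sSup {s : ℝ | ∃ N : 𝒳 → Matrix (Fin d) (Fin d) ℂ, IsPOVM N ∧
          s = ∑ x : 𝒳, ((N x * σ x y).trace).re}) / (Fintype.card 𝒴 : ℝ) := by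
  simpa only [guessingProb, Fintype.sum_prod_type] using stmt_15_general σ
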